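/- Let (P_t)_{t≥0} be a Markov semigroup on ℝ^d. Suppose there are a measurable map b : ℝ^d → ℝ^d, a measurable map c from ℝ^d into the symmetric nonnegative-definite d×d real matrices, and a Borel kernel ν(x, dy) of σ-finite measures on ℝ^d with ν(x,{0}) = 0 and ∫ min(1,|y|²) ν(x,dy) < ∞ for every x, such that for every f ∈ C_c^∞(ℝ^d), sup_{x∈ℝ^d} |t^{−1}(P_t f(x) − f(x)) − L f(x)| → 0 as t → 0+, where L f(x) := ⟨b(x), ∇f(x)⟩ + (1/2) Tr(c(x) ∇²f(x)) + ∫_{ℝ^d} (f(x+y) − f(x) − ⟨y, ∇f(x)⟩ 1_{B₁(0)}(y)) ν(x, dy). Assume there exist constants R > r ≥ 0 such that: (i) for every nonempty open set O ⊆ B_R(0) ∖ B̄_r(0) and every nonempty compact set K ⊂ ℝ^d, inf_{x∈K} ν(x, O) > 0; (ii) for every nonnegative lower semicontinuous function f : ℝ^d → ℝ, the map x ↦ ∫_{ℝ^d} f(y + x) ν(x, dy) (with values in [0,∞]) is lower semicontinuous. Then for every t > 0, every x ∈ ℝ^d and every nonempty open set O ⊆ ℝ^d, P_t(x, O) > 0.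 -/

import Mathlib

open MeasureTheory ProbabilityTheory Set
open scoped ENNReal RealInnerProductSpace

lemma comp_pos_aux {E : Type*} [MeasurableSpace E] (P : ℝ → Kernel E E) [∀ t, IsMarkovKernel (P t)]
    (hCK : ∀ s t : ℝ, 0 ≤ s → 0 ≤ t → ∀ f : E → ℝ,
      Measurable f → (∃ M, ∀ y, |f y| ≤ M) →
      ∀ x, ∫ y, f y ∂(P (t + s) x) = ∫ y, (∫ z, f z ∂(P s y)) ∂(P t x))
    (s t : ℝ) (hs : 0 ≤ s) (ht : 0 ≤ t) (x : E) (U O : Set E)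
    (hO : MeasurableSet O) (hU : 0 < P t x U) (h : ∀ y ∈ U, 0 < P s y O) :
    0 < P (t + s) x O := by
  have h1 := hCK s t hs ht (O.indicator 1) (measurable_one.indicator hO)
    ⟨1, fun y => by by_cases hy : y ∈ O <;> simp [hy]⟩ x
  simp only [integral_indicator_one hO] at h1
  by_contra hcon
  have h0 : P (t + s) x O = 0 := by simpa using hcon
  rw [measureReal_def, h0, ENNReal.toReal_zero] at h1
  have hm : Measurable fun y => (P s y).real O := ((P s).measurable_coe hO).ennreal_toReal
  have hint : Integrable (fun y => (P s y).real O) (P t x) :=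
    Integrable.of_bound hm.aestronglyMeasurable 1
      (Filter.Eventually.of_forall fun y => by
        rw [Real.norm_of_nonneg measureReal_nonneg]; exact measureReal_le_one)
  have h2 := (integral_eq_zero_iff_of_nonneg (fun y => measureReal_nonneg) hint).1 h1.symm
  have h3 : P t x {y | ¬ (P s y).real O = 0} = 0 := h2
  refine hU.ne' (measure_mono_null (fun y hy => ?_) h3)
  have := h y hy
  simp only [mem_setOf_eq, measureReal_def, ENNReal.toReal_eq_zero_iff, measure_ne_top, or_false]
  exact this.ne'

lemma lipschitz_aux {E : Type*} [MeasurableSpace E] (P : ℝ → Kernel E E)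
    [∀ t, IsMarkovKernel (P t)]
    (hCK : ∀ s t : ℝ, 0 ≤ s → 0 ≤ t → ∀ f : E → ℝ,
      Measurable f → (∃ M, ∀ y, |f y| ≤ M) →
      ∀ x, ∫ y, f y ∂(P (t + s) x) = ∫ y, (∫ z, f z ∂(P s y)) ∂(P t x))
    (f L : E → ℝ) (hf : Measurable f) (hf0 : ∀ y, 0 ≤ f y) (hf1 : ∀ y, f y ≤ 1)
    (hL : ∃ δ > 0, ∀ t : ℝ, 0 < t → t < δ → ∀ x,
        |((∫ y, f y ∂(P t x)) - f x) / t - L x| ≤ 1)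
    (t : ℝ) (x : E) (hpos : 0 < ∫ y, f y ∂(P t x)) :
    ∃ δ > 0, ∀ s, 0 < s → s < δ → s ≤ t → 0 < ∫ y, f y ∂(P (t - s) x) := by
  obtain ⟨δ, hδ, hL⟩ := hL
  have hb : ∀ t x, 0 ≤ ∫ y, f y ∂(P t x) ∧ ∫ y, f y ∂(P t x) ≤ 1 := fun t x =>
    ⟨integral_nonneg hf0, by
      have : ∫ y, f y ∂(P t x) ≤ ∫ y, (1:ℝ) ∂(P t x) :=
        integral_mono_of_nonneg (Filter.Eventually.of_forall hf0) (integrable_const _)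
          (Filter.Eventually.of_forall hf1)
      simpa using this⟩
  have hfi : ∀ t x, Integrable f (P t x) := fun t x =>
    Integrable.of_bound hf.aestronglyMeasurable 1 (Filter.Eventually.of_forall fun y => by
      rw [Real.norm_of_nonneg (hf0 y)]; exact hf1 y)
  have hLb : ∀ x, |L x| ≤ 1 / (δ / 2) + 1 := fun x => by
    have h1 := hL (δ / 2) (by positivity) (by linarith) x
    have h2 : |((∫ y, f y ∂(P (δ/2) x)) - f x) / (δ/2)| ≤ 1 / (δ / 2) := by
      rw [abs_div, abs_of_pos (by positivity : 0 < δ / 2)]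
      gcongr
      rw [abs_le]
      constructor <;> linarith [hb (δ/2) x, hf0 x, hf1 x]
    rw [abs_le] at *
    constructor <;> linarith
  set C := 1 / (δ / 2) + 1 + 1 with hC
  have hCpos : 0 < C := by positivity
  have hlip : ∀ s, 0 < s → s < δ → ∀ y, (∫ z, f z ∂(P s y)) ≤ f y + C * s := fun s hs hsδ y => by
    have h1 := hL s hs hsδ y
    have h2 := hLb y
    have h3 : ((∫ z, f z ∂(P s y)) - f y) / s ≤ C := by
      rw [abs_le] at *
      linarith
    rw [div_le_iff₀ hs] at h3
    linarith
  refine ⟨min δ ((∫ y, f y ∂(P t x)) / C), by positivity, fun s hs hsd hst => ?_⟩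
  have hs1 := lt_of_lt_of_le hsd (min_le_left _ _)
  have hs2 := lt_of_lt_of_le hsd (min_le_right _ _)
  rw [lt_div_iff₀ hCpos] at hs2
  have h1 := hCK s (t - s) hs.le (by linarith) f hf
    ⟨1, fun y => by rw [abs_of_nonneg (hf0 y)]; exact hf1 y⟩ x
  rw [sub_add_cancel] at h1
  have h2 : ∫ y, (∫ z, f z ∂(P s y)) ∂(P (t - s) x) ≤ ∫ y, (f y + C * s) ∂(P (t - s) x) :=
    integral_mono_of_nonneg (Filter.Eventually.of_forall fun y => (hb s y).1)
      ((hfi _ _).add (integrable_const _)) (Filter.Eventually.of_forall (hlip s hs hs1))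
  rw [integral_add (hfi _ _) (integrable_const _)] at h2
  simp at h2
  linarith

lemma pos_of_integral_aux {E : Type*} [MeasurableSpace E] (μ : Measure E) (f : E → ℝ) (O : Set E)
    (hfO : ∀ y, y ∉ O → f y = 0) (h : 0 < ∫ y, f y ∂μ) : 0 < μ O := by
  by_contra hcon
  have h0 : μ O = 0 := by simpa using hcon
  have : f =ᵐ[μ] 0 := by
    refine measure_mono_null (fun y hy => ?_) h0
    by_contra hyO
    exact hy (hfO y hyO)
  rw [integral_congr_ae this] at h
  simp at h

/-- A Lévy-type Markov semigroup whose generator on `C_c^∞` is the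
integro-differential operator with triplet `(b, c, ν)`, where the Lévy kernel `ν` has enough
jump activity in an annulus (uniformly on compacts) and satisfies a lower semicontinuity
condition, is open-set irreducible: `P_t(x, O) > 0` for all `t > 0`, `x` and nonempty open
`O`. -/
theorem open_set_irreducibility_of_levy_type_semigroup
    (d : ℕ)
    (P : ℝ → Kernel (EuclideanSpace ℝ (Fin d)) (EuclideanSpace ℝ (Fin d)))
    [∀ t, IsMarkovKernel (P t)]
    (hP0 : ∀ x, P 0 x = Measure.dirac x)
    (hCK : ∀ s t : ℝ, 0 ≤ s → 0 ≤ t → ∀ f : EuclideanSpace ℝ (Fin d) → ℝ,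
      Measurable f → (∃ M, ∀ y, |f y| ≤ M) →
      ∀ x, ∫ y, f y ∂(P (t + s) x) = ∫ y, (∫ z, f z ∂(P s y)) ∂(P t x))
    -- the Lévy triplet
    (b : EuclideanSpace ℝ (Fin d) → EuclideanSpace ℝ (Fin d)) (hb : Measurable b)
    (c : EuclideanSpace ℝ (Fin d) → Matrix (Fin d) (Fin d) ℝ)
    (hc : ∀ i j, Measurable fun x => c x i j)
    (hcsymm : ∀ x, (c x).IsSymm) (hcpos : ∀ x, (c x).PosSemidef)
    (ν : Kernel (EuclideanSpace ℝ (Fin d)) (EuclideanSpace ℝ (Fin d)))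
    (hνsf : ∀ x, SigmaFinite (ν x))
    (hν0 : ∀ x, ν x ({0} : Set (EuclideanSpace ℝ (Fin d))) = 0)
    (hν2 : ∀ x, ∫⁻ y, ENNReal.ofReal (min 1 (‖y‖ ^ 2)) ∂(ν x) < ∞)
    -- the generator on `C_c^∞` is the pseudo-differential operator with triplet `(b,c,ν)`:
    -- `sup_x |t⁻¹(P_t f(x) − f(x)) − L f(x)| → 0` as `t → 0+`
    (hgen : ∀ f : EuclideanSpace ℝ (Fin d) → ℝ, ContDiff ℝ (⊤ : ℕ∞) f → HasCompactSupport f →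
      ∀ ε : ℝ, 0 < ε → ∃ δ > 0, ∀ t : ℝ, 0 < t → t < δ → ∀ x,
        |((∫ y, f y ∂(P t x)) - f x) / t -
          (⟪b x, gradient f x⟫ +
            (1 / 2) * ∑ i : Fin d, ∑ j : Fin d, c x i j *
              iteratedFDeriv ℝ 2 f x
                ![EuclideanSpace.single i (1:ℝ), EuclideanSpace.single j (1:ℝ)] +
            ∫ y, (f (x + y) - f x -
              (Metric.ball (0 : EuclideanSpace ℝ (Fin d)) 1).indicator
                (fun z => ⟪z, gradient f x⟫) y) ∂(ν x))| ≤ ε)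
    -- (i): uniform jump activity in the annulus `B_R(0) ∖ B̄_r(0)` over compact sets
    (R r : ℝ) (hr : 0 ≤ r) (hrR : r < R)
    (hi : ∀ O : Set (EuclideanSpace ℝ (Fin d)),
      O ⊆ Metric.ball (0 : EuclideanSpace ℝ (Fin d)) R \
        Metric.closedBall (0 : EuclideanSpace ℝ (Fin d)) r →
      IsOpen O → O.Nonempty →
      ∀ K : Set (EuclideanSpace ℝ (Fin d)), IsCompact K → K.Nonempty →
        ∃ m : ℝ≥0∞, 0 < m ∧ ∀ x ∈ K, m ≤ ν x O)
    -- (ii): lower semicontinuity of `x ↦ ∫ f(y+x) ν(x,dy)`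
    (hii : ∀ f : EuclideanSpace ℝ (Fin d) → ℝ, (∀ x, 0 ≤ f x) →
      LowerSemicontinuous f →
      LowerSemicontinuous fun x => ∫⁻ y, ENNReal.ofReal (f (y + x)) ∂(ν x)) :
    ∀ t : ℝ, 0 < t → ∀ x, ∀ O : Set (EuclideanSpace ℝ (Fin d)),
      IsOpen O → O.Nonempty → 0 < P t x O := by
  intro t ht x O hO hOne
  classical
  -- degenerate dimension
  rcases Nat.eq_zero_or_pos d with hd | hd
  · subst hd
    have : O = univ := by
      obtain ⟨z, hz⟩ := hOne
      ext y
      simp [Subsingleton.elim y z, hz]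
    simp [this]
  let Q : EuclideanSpace ℝ (Fin d) → EuclideanSpace ℝ (Fin d) → Prop := fun x z => ∀ O : Set (EuclideanSpace ℝ (Fin d)), IsOpen O → z ∈ O →
    ∃ U : Set (EuclideanSpace ℝ (Fin d)), IsOpen U ∧ x ∈ U ∧ ∃ δ > 0, ∀ y ∈ U, ∀ t : ℝ, 0 < t → t < δ → 0 < P t y O
  have Qtrans : ∀ x y z, Q x y → Q y z → Q x z := by
    intro x y z hxy hyz O hO hz
    obtain ⟨U, hU, hyU, δ, hδ, h⟩ := hyz O hO hz
    obtain ⟨V, hV, hxV, δ', hδ', h'⟩ := hxy U hU hyU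
    refine ⟨V, hV, hxV, min δ δ', lt_min hδ hδ', fun w hw t ht htd => ?_⟩
    have h1 := lt_of_lt_of_le htd (min_le_left _ _)
    have h2 := lt_of_lt_of_le htd (min_le_right _ _)
    have := comp_pos_aux P hCK (t/2) (t/2) (by linarith) (by linarith) w U O hO.measurableSet
      (h' w hw (t/2) (by linarith) (by linarith))
      (fun y hy => h y hy (t/2) (by linarith) (by linarith))
    simpa using this
  have Qjump : ∀ x v : EuclideanSpace ℝ (Fin d), r < ‖v‖ → ‖v‖ < R → Q x (x + v) := by
    intro x v hv1 hv2 O hO hz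
    obtain ⟨e, he, heO⟩ := Metric.isOpen_iff.1 hO _ hz
    have hvpos : 0 < ‖v‖ := lt_of_le_of_lt hr hv1
    obtain ⟨a, ha, hae, hav, har, haR⟩ : ∃ a > 0, 2 * a < e ∧ 4 * a < ‖v‖ ∧ a < ‖v‖ - r ∧
        a < R - ‖v‖ := by
      refine ⟨min (min e ‖v‖) (min (‖v‖ - r) (R - ‖v‖)) / 5, ?_, ?_⟩
      · have : 0 < min (min e ‖v‖) (min (‖v‖ - r) (R - ‖v‖)) :=
          lt_min (lt_min he hvpos) (lt_min (by linarith) (by linarith))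
        linarith
      · have h0 : 0 < min (min e ‖v‖) (min (‖v‖ - r) (R - ‖v‖)) :=
          lt_min (lt_min he hvpos) (lt_min (by linarith) (by linarith))
        have h1 : min (min e ‖v‖) (min (‖v‖ - r) (R - ‖v‖)) ≤ e :=
          (min_le_left _ _).trans (min_le_left _ _)
        have h2 : min (min e ‖v‖) (min (‖v‖ - r) (R - ‖v‖)) ≤ ‖v‖ :=
          (min_le_left _ _).trans (min_le_right _ _)
        have h3 : min (min e ‖v‖) (min (‖v‖ - r) (R - ‖v‖)) ≤ ‖v‖ - r :=
          (min_le_right _ _).trans (min_le_left _ _)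
        have h4 : min (min e ‖v‖) (min (‖v‖ - r) (R - ‖v‖)) ≤ R - ‖v‖ :=
          (min_le_right _ _).trans (min_le_right _ _)
        refine ⟨?_, ?_, ?_, ?_⟩ <;> linarith
    let f : ContDiffBump (x + v) := ⟨a, 2 * a, ha, by linarith⟩
    obtain ⟨m, hm, hmK⟩ := hi (Metric.ball v (a / 2)) (by
      intro w hw
      rw [Metric.mem_ball, dist_eq_norm] at hw
      have h1 := norm_sub_norm_le w v
      have h2 := norm_sub_norm_le v w
      rw [norm_sub_rev] at h2
      simp only [mem_diff, Metric.mem_ball, Metric.mem_closedBall, dist_zero_right, not_le]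
      constructor <;> linarith) Metric.isOpen_ball ⟨v, by simp [ha]⟩
      (Metric.closedBall x (a / 2)) (isCompact_closedBall _ _) ⟨x, Metric.mem_closedBall_self (by linarith)⟩
    set m' : ℝ := (min m 1).toReal with hm'
    have hm'top : min m 1 ≠ ∞ := ne_top_of_le_ne_top ENNReal.one_ne_top (min_le_right _ _)
    have hm'pos : 0 < m' := ENNReal.toReal_pos (lt_min hm one_pos).ne' hm'top
    obtain ⟨δ, hδ, hgen'⟩ := hgen f f.contDiff f.hasCompactSupport (m' / 2) (by linarith)
    refine ⟨Metric.ball x (a / 2), Metric.isOpen_ball, by simp [ha], δ, hδ,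
      fun y hy t ht htδ => ?_⟩
    have hgy := hgen' t ht htδ y
    rw [Metric.mem_ball, dist_eq_norm] at hy
    have hzero : ∀ w : EuclideanSpace ℝ (Fin d), ‖w‖ < a → f (y + w) = 0 := by
      intro w hw
      apply f.zero_of_le_dist
      change 2 * a ≤ _
      rw [dist_eq_norm]
      have h1 : ‖v‖ ≤ ‖y + w - (x + v)‖ + ‖y - x‖ + ‖w‖ := by
        have : v = -(y + w - (x + v)) + (y - x) + w := by abel
        calc ‖v‖ = ‖-(y + w - (x + v)) + (y - x) + w‖ := by rw [← this]
          _ ≤ _ := by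
            refine (norm_add₃_le).trans ?_
            rw [norm_neg]
      linarith
    have hev : (f : EuclideanSpace ℝ (Fin d) → ℝ) =ᶠ[nhds y] fun _ => 0 := by
      filter_upwards [Metric.ball_mem_nhds y ha] with w hw
      rw [Metric.mem_ball, dist_eq_norm] at hw
      have := hzero (w - y) hw
      simpa using this
    have hgrad : gradient f y = 0 := by
      rw [Filter.EventuallyEq.gradient_eq hev]
      exact gradient_fun_const _ _
    have hhess : iteratedFDeriv ℝ 2 f y = 0 := by
      rw [(Filter.EventuallyEq.iteratedFDeriv ℝ hev 2).eq_of_nhds]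
      simp [iteratedFDeriv_zero_fun]
    have hfy : f y = 0 := hev.eq_of_nhds
    have hint0 : Integrable (fun w : EuclideanSpace ℝ (Fin d) => min 1 (‖w‖ ^ 2)) (ν y) := by
      refine ⟨by fun_prop, ?_⟩
      rw [hasFiniteIntegral_iff_ofReal (Filter.Eventually.of_forall fun w => by positivity)]
      exact hν2 y
    have hint : Integrable (fun w : EuclideanSpace ℝ (Fin d) => f (y + w)) (ν y) := by
      refine (hint0.const_mul (1 / min 1 (a ^ 2))).mono'
        (f.continuous.comp (continuous_const.add continuous_id)).aestronglyMeasurable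
        (Filter.Eventually.of_forall fun w => ?_)
      rw [Real.norm_of_nonneg f.nonneg]
      by_cases hw : ‖w‖ < a
      · rw [hzero w hw]; positivity
      · have h1 : min 1 (a ^ 2) ≤ min 1 (‖w‖ ^ 2) := by
          push Not at hw
          gcongr
        have h2 : 0 < min 1 (a ^ 2) := by positivity
        refine f.le_one.trans ?_
        rw [one_div, inv_mul_eq_div, le_div_iff₀ h2, one_mul]
        exact h1
    have hlow : m' ≤ ∫ w, f (y + w) ∂(ν y) := by
      have h1 : min m 1 ≤ ENNReal.ofReal (∫ w, f (y + w) ∂(ν y)) := by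
        rw [ofReal_integral_eq_lintegral_ofReal hint (Filter.Eventually.of_forall fun w => f.nonneg)]
        refine (min_le_left _ _).trans ((hmK y ?_).trans ?_)
        · rw [Metric.mem_closedBall, dist_eq_norm]; exact hy.le
        · rw [← lintegral_indicator_one Metric.isOpen_ball.measurableSet]
          apply lintegral_mono
          intro w
          by_cases hw : w ∈ Metric.ball v (a / 2)
          · have : f (y + w) = 1 := by
              apply f.one_of_mem_closedBall
              change _ ∈ Metric.closedBall _ a
              rw [Metric.mem_ball, dist_eq_norm] at hw
              rw [Metric.mem_closedBall, dist_eq_norm]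
              have : y + w - (x + v) = (y - x) + (w - v) := by abel
              rw [this]
              refine (norm_add_le _ _).trans ?_
              linarith
            simp [hw, this]
          · simp [hw]
      exact (ENNReal.toReal_le_of_le_ofReal (integral_nonneg fun w => f.nonneg) h1)
    rw [hgrad, hhess, hfy] at hgy
    simp only [inner_zero_right, sub_zero, indicator_zero, ContinuousMultilinearMap.zero_apply,
      mul_zero, Finset.sum_const_zero, zero_add] at hgy
    rw [abs_le] at hgy
    have hpos : 0 < (∫ w, f w ∂(P t y)) / t := by linarith [hgy.1]
    have hpos' : 0 < ∫ w, f w ∂(P t y) := by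
      rcases div_pos_iff.1 hpos with h | h <;> linarith [h.1, h.2]
    refine pos_of_integral_aux _ f O (fun w hw => ?_) hpos'
    apply f.zero_of_le_dist
    change 2 * a ≤ _
    by_contra hlt
    exact hw (heO (by rw [Metric.mem_ball]; linarith))
  have Qsmall : ∀ x u : EuclideanSpace ℝ (Fin d), ‖u‖ < (R - r) / 2 → Q x (x + u) := by
    intro x u hu
    let w : EuclideanSpace ℝ (Fin d) := EuclideanSpace.single ⟨0, hd⟩ ((R + r) / 2)
    have hw : ‖w‖ = (R + r) / 2 := by
      rw [EuclideanSpace.norm_single, Real.norm_eq_abs]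
      exact abs_of_nonneg (by linarith)
    have h1 := norm_add_le w u
    have h2 : ‖w‖ ≤ ‖w + u‖ + ‖u‖ := by simpa using norm_sub_le (w + u) u
    have hA := Qjump x (w + u) (by linarith) (by linarith)
    have hB := Qjump (x + (w + u)) (-w) (by rw [norm_neg]; linarith) (by rw [norm_neg]; linarith)
    have := Qtrans _ _ _ hA hB
    convert this using 1
    abel
  have Qall : ∀ x z, Q x z := by
    intro x z
    obtain ⟨n, hn⟩ := exists_nat_gt (‖z - x‖ / ((R - r) / 2))
    have hRr : 0 < (R - r) / 2 := by linarith
    have hn0 : (0:ℝ) < n := lt_of_le_of_lt (by positivity) hn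
    let u : EuclideanSpace ℝ (Fin d) := (n : ℝ)⁻¹ • (z - x)
    have hu : ‖u‖ < (R - r) / 2 := by
      rw [norm_smul, norm_inv, Real.norm_of_nonneg hn0.le, inv_mul_lt_iff₀ hn0]
      rwa [div_lt_iff₀ hRr] at hn
    have hk : ∀ k : ℕ, Q x (x + (k : ℝ) • u) := by
      intro k
      induction k with
      | zero => simpa using Qsmall x 0 (by simpa using hRr)
      | succ k ih =>
        have := Qtrans _ _ _ ih (Qsmall _ u hu)
        convert this using 1
        push_cast
        rw [add_smul, one_smul, add_assoc]
    have := hk n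
    simpa [u, smul_smul, hn0.ne'] using this
  -- a point of the support of `P t x`
  obtain ⟨z, hz⟩ := hOne
  obtain ⟨y, -, hy⟩ := exists_mem_forall_mem_nhdsWithin_pos_measure (μ := P t x)
    (s := univ) (by simp)
  obtain ⟨U, hU, hyU, δ, hδ, hUP⟩ := Qall y z O hO hz
  obtain ⟨e, he, heU⟩ := Metric.isOpen_iff.1 hU _ hyU
  let f : ContDiffBump y := ⟨e / 2, e, by linarith, by linarith⟩
  have hfpos : 0 < ∫ w, f w ∂(P t x) := by
    rw [integral_pos_iff_support_of_nonneg (fun w => f.nonneg)]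
    · rw [f.support_eq]
      exact hy _ (by simpa using Metric.ball_mem_nhds y he)
    · exact Integrable.of_bound f.continuous.aestronglyMeasurable 1
        (Filter.Eventually.of_forall fun w => by
          rw [Real.norm_of_nonneg f.nonneg]; exact f.le_one)
  obtain ⟨δ', hδ', hlip⟩ := lipschitz_aux P hCK f _ f.continuous.measurable (fun w => f.nonneg)
    (fun w => f.le_one) (hgen f f.contDiff f.hasCompactSupport 1 one_pos) t x hfpos
  obtain ⟨s, hs0, hs1⟩ := exists_between (lt_min ht (lt_min hδ hδ'))
  have hst : s < t := lt_of_lt_of_le hs1 (min_le_left _ _)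
  have hsδ : s < δ := lt_of_lt_of_le hs1 ((min_le_right _ _).trans (min_le_left _ _))
  have hsδ' : s < δ' := lt_of_lt_of_le hs1 ((min_le_right _ _).trans (min_le_right _ _))
  have hUpos : 0 < P (t - s) x U := by
    refine pos_of_integral_aux _ f U (fun w hw => ?_) (hlip s hs0 hsδ' hst.le)
    apply f.zero_of_le_dist
    change e ≤ _
    by_contra hlt
    exact hw (heU (by rw [Metric.mem_ball]; linarith))
  have := comp_pos_aux P hCK s (t - s) hs0.le (by linarith) x U O hO.measurableSet hUpos
    (fun y hy => hUP y hy s hs0 hsδ)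
  simpa using this
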